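/- There exist α₀, δ₀ > 0 such that for every α ∈ (0, α₀) and δ ∈ (0, δ₀) there is a constant C > 0 with the following property: for every open set Ω ⊆ ℝ³, all η, ξ > 0, and every smooth map Q : Ω → Sym₀, setting A_δ = { x ∈ Ω : dist(Q(x), 𝒩) < δ }, one has ∫_{B_α(0)} H²( { x ∈ A_δ : Q(x) − Y ∈ 𝒯 } ) dY ≤ C · η · 𝓔_{η,ξ}(Q, A_δ), where the outer integral is over the ball B_α(0) ⊂ Sym₀ with respect to 5-dimensional Lebesgue measure and H² is the 2-dimensional Hausdorff measure on ℝ³. -/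

import Mathlib

/- STATEMENT 11: There exist α₀, δ₀ > 0 such that for every α ∈ (0,α₀), δ ∈ (0,δ₀)
there is C > 0 with: for every open Ω ⊆ ℝ³, η, ξ > 0 and smooth Q : Ω → Sym₀, with
A_δ = {x ∈ Ω : dist(Q(x),𝒩) < δ},
∫_{B_α(0)⊂Sym₀} H²({x ∈ A_δ : Q(x) − Y ∈ 𝒯}) dY ≤ C·η·𝓔_{η,ξ}(Q, A_δ),
the outer integral w.r.t. 5-dimensional Lebesgue (Hausdorff) measure on Sym₀. -/

noncomputable section

open Matrix MeasureTheory Metric Set Filter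

abbrev Mat3 : Type := Matrix (Fin 3) (Fin 3) ℝ
abbrev V3 : Type := EuclideanSpace ℝ (Fin 3)
abbrev E9 : Type := EuclideanSpace ℝ (Fin 3 × Fin 3)

def toM (A : E9) : Mat3 := Matrix.of fun i j => A (i, j)

def Sym0E : Set E9 := {A | (toM A).IsSymm ∧ (toM A).trace = 0}

def unitVec (n : Fin 3 → ℝ) : Prop := ∑ i, (n i) ^ 2 = 1

def uniax (s : ℝ) (n : Fin 3 → ℝ) : Mat3 :=
  s • (Matrix.vecMulVec n n - (1 / 3 : ℝ) • (1 : Mat3))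

def sStar (a b c : ℝ) : ℝ := (b + Real.sqrt (b ^ 2 + 24 * a * c)) / (4 * c)

def fLdG (a b c C : ℝ) (Q : Mat3) : ℝ :=
  C - a / 2 * (Q * Q).trace - b / 3 * (Q * Q * Q).trace + c / 4 * ((Q * Q).trace) ^ 2

def gMagE (sS : ℝ) (A : E9) : ℝ := 2 / 3 * sS - A (2, 2)

def NsetE (s : ℝ) : Set E9 := {A | ∃ n, unitVec n ∧ toM A = uniax s n}

def IsEigen (Q : Mat3) (μ : ℝ) (v : Fin 3 → ℝ) : Prop := Q.mulVec v = μ • v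

def MaxEigen (Q : Mat3) (lam : ℝ) (n : Fin 3 → ℝ) : Prop :=
  unitVec n ∧ IsEigen Q lam n ∧
    ∀ (μ : ℝ) (v : Fin 3 → ℝ), v ≠ 0 → IsEigen Q μ v → μ ≤ lam

def SimpleMaxEigen (Q : Mat3) (lam : ℝ) (n : Fin 3 → ℝ) : Prop :=
  MaxEigen Q lam n ∧ ∀ v : Fin 3 → ℝ, IsEigen Q lam v → ∃ t : ℝ, v = t • n

def TsetE : Set E9 :=
  {A | A ∈ Sym0E ∧ A ≠ 0 ∧ ∃ (lam : ℝ) (n : Fin 3 → ℝ), SimpleMaxEigen (toM A) lam n ∧ n 2 = 0}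

/-- C₀(ξ,η) = −min over Sym₀ of (1/ξ²)f + (1/η²)g. -/
def C0const (a b c C ξ η : ℝ) : ℝ :=
  -sInf {v | ∃ P ∈ Sym0E,
    v = 1 / ξ ^ 2 * fLdG a b c C (toM P) + 1 / η ^ 2 * gMagE (sStar a b c) P}

/-- Pointwise energy density (1/2)|∇Q|² + (1/ξ²)f(Q) + (1/η²)g(Q) + C₀,
with |∇Q|² = ∑ᵢ |∂ᵢQ|² computed via `fderivWithin` on Ω. -/
def density (a b c C ξ η : ℝ) (Ω : Set V3) (Q : V3 → E9) (x : V3) : ℝ :=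
  1 / 2 * ∑ i : Fin 3, ‖fderivWithin ℝ Q Ω x (EuclideanSpace.single i (1 : ℝ))‖ ^ 2 +
    1 / ξ ^ 2 * fLdG a b c C (toM (Q x)) + 1 / η ^ 2 * gMagE (sStar a b c) (Q x) +
    C0const a b c C ξ η

/-!
Near `𝒩` the top eigenvector of `Q` is close to the director of the nearest uniaxial tensor, so
`Q(x) - Y ∈ 𝒯` with `Y` small forces `Q(x)` to be tilted away from `e₃`, say `Q₃₃ < s / 3`. Rotating
such a `Q(x)` upright leaves `f` unchanged and lowers `g` by a fixed amount; hence on the tilted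
region the energy density is at least `|∇Q|² / 2 + s / (6 η²)`, which by AM-GM dominates
`(|∇Q| + 1 / η) / η`. On the other hand, bounded pieces of `𝒯` lie in the image of a ball in `ℝ⁴`
under a smooth map, so their `r`-neighbourhoods in `Sym₀` have measure `O(r)`, and covering the
tilted region by small Vitali balls gives the coarea-type inequality
`∫ H²({x : Q(x) - Y ∈ 𝒯}) dY ≤ K ∫ (|∇Q| + 1 / η) dx`.
-/

section TubeVolume

open Module

lemma card_Icc_neg_ceil_le {t : ℝ} (ht : 0 ≤ t) :
    ((Finset.Icc (-⌈t⌉) ⌈t⌉).card : ℝ) ≤ 2 * t + 3 := by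
  have hceil : 0 ≤ ⌈t⌉ := Int.ceil_nonneg ht
  have hcard : ((Finset.Icc (-⌈t⌉) ⌈t⌉).card : ℤ) = 2 * ⌈t⌉ + 1 := by
    rw [Int.card_Icc]
    lia
  have hcard' : ((Finset.Icc (-⌈t⌉) ⌈t⌉).card : ℝ) = 2 * ⌈t⌉ + 1 := mod_cast hcard
  linarith [Int.ceil_lt_add_one t]

lemma exists_int_mem_Icc_abs_sub_mul_le {M r x : ℝ} (hr : 0 < r) (hx : |x| ≤ M) :
    ∃ j ∈ Finset.Icc (-⌈M / r⌉) ⌈M / r⌉, |x - j * r| ≤ r := by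
  obtain ⟨hx₁, hx₂⟩ := abs_le.1 hx
  have hfloor : ⌊x / r⌋ * r ≤ x := (le_div_iff₀ hr).1 (Int.floor_le _)
  have hfloor' : x < (⌊x / r⌋ + 1) * r := (div_lt_iff₀ hr).1 (Int.lt_floor_add_one _)
  refine ⟨⌊x / r⌋, Finset.mem_Icc.2 ⟨?_, ?_⟩, abs_le.2 ⟨by linarith, by linarith⟩⟩
  · rw [← Int.floor_neg, ← neg_div]
    gcongr
  · exact (Int.floor_le_floor (by gcongr)).trans (Int.floor_le_ceil _)

lemma exists_finset_net_closedBall_pi {ι : Type*} [Fintype ι] {M r : ℝ} (hM : 0 ≤ M)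
    (hr : 0 < r) (hr1 : r ≤ 1) :
    ∃ t : Finset (ι → ℝ), (t.card : ℝ) ≤ ((2 * M + 3) / r) ^ Fintype.card ι ∧
      ∀ x ∈ closedBall (0 : ι → ℝ) M, ∃ y ∈ t, dist x y ≤ r := by
  classical
  let grid : Finset (ι → ℝ) :=
    (Fintype.piFinset fun _ : ι => Finset.Icc (-⌈M / r⌉) ⌈M / r⌉).image fun j i => j i * r
  refine ⟨grid, ?_, fun x hx => ?_⟩
  · have hside : 2 * (M / r) + 3 ≤ (2 * M + 3) / r := by
      rw [add_div, mul_div_assoc]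
      gcongr
      exact (le_div_iff₀ hr).2 (by linarith)
    calc (grid.card : ℝ)
        ≤ ((Finset.Icc (-⌈M / r⌉) ⌈M / r⌉).card : ℝ) ^ Fintype.card ι := by
          exact_mod_cast Finset.card_image_le.trans_eq (by simp)
      _ ≤ ((2 * M + 3) / r) ^ Fintype.card ι := by
          gcongr
          exact (card_Icc_neg_ceil_le (by positivity)).trans hside
  · have hx' : ∀ i, |x i| ≤ M := fun i =>
      (norm_le_pi_norm x i).trans (mem_closedBall_zero_iff.1 hx)
    choose j hj hjx using fun i => exists_int_mem_Icc_abs_sub_mul_le hr (hx' i)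
    exact ⟨_, Finset.mem_image_of_mem _ (Fintype.mem_piFinset.2 hj),
      (dist_pi_le_iff hr.le).2 hjx⟩

variable {E : Type*} [NormedAddCommGroup E] [NormedSpace ℝ E]

lemma exists_lipschitzOnWith_closedBall_of_contDiff {F : Type*} [NormedAddCommGroup F]
    [NormedSpace ℝ F] [ProperSpace F] {Φ : F → E} (hΦ : ContDiff ℝ 1 Φ) (x : F) (M : ℝ) :
    ∃ L, LipschitzOnWith L Φ (closedBall x M) :=
  (hΦ.locallyLipschitz.locallyLipschitzOn).exists_lipschitzOnWith_of_compact
    (isCompact_closedBall x M)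

lemma exists_finset_cover_thickening_image {ι : Type*} [Fintype ι] {Φ : (ι → ℝ) → E}
    (hΦ : ContDiff ℝ 1 Φ) {M : ℝ} (hM : 0 ≤ M) :
    ∃ L, 0 ≤ L ∧ ∀ r, 0 < r → r ≤ 1 →
      ∃ t : Finset (ι → ℝ), (t.card : ℝ) ≤ ((2 * M + 3) / r) ^ Fintype.card ι ∧
        thickening r (Φ '' closedBall 0 M) ⊆ ⋃ y ∈ t, closedBall (Φ y) ((L + 1) * r) := by
  obtain ⟨L, hL⟩ := exists_lipschitzOnWith_closedBall_of_contDiff hΦ 0 (M + 1)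
  refine ⟨L, L.coe_nonneg, fun r hr hr1 => ?_⟩
  obtain ⟨t, hcard, hnet⟩ := exists_finset_net_closedBall_pi (ι := ι) hM hr hr1
  refine ⟨t, hcard, fun w hw => ?_⟩
  obtain ⟨_, ⟨x, hx, rfl⟩, hwx⟩ := mem_thickening_iff.1 hw
  obtain ⟨y, hyt, hxy⟩ := hnet x hx
  have hx' : x ∈ closedBall 0 (M + 1) := closedBall_subset_closedBall (by linarith) hx
  have hy' : y ∈ closedBall 0 (M + 1) := by
    have := dist_triangle_left y 0 x
    rw [mem_closedBall] at hx ⊢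
    linarith
  refine mem_iUnion₂.2 ⟨y, hyt, ?_⟩
  calc dist w (Φ y) ≤ dist w (Φ x) + dist (Φ x) (Φ y) := dist_triangle _ _ _
    _ ≤ r + L * r := add_le_add hwx.le ((hL.dist_le_mul _ hx' _ hy').trans (by gcongr))
    _ = (L + 1) * r := by ring

variable [MeasurableSpace E] [BorelSpace E]

lemma exists_hausdorffMeasure_submodule_inter_closedBall_le (V : Submodule ℝ E)
    [FiniteDimensional ℝ V] :
    ∃ K > 0, ∀ (z : E) (ρ : ℝ), 0 ≤ ρ →
      μH[finrank ℝ V] ((V : Set E) ∩ closedBall z ρ) ≤ ENNReal.ofReal (K * ρ ^ finrank ℝ V) := by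
  set β : ENNReal := μH[finrank ℝ V] (ball (0 : V) 1)
  have hβ : 0 < β.toReal :=
    ENNReal.toReal_pos (measure_ball_pos _ _ one_pos).ne' measure_ball_lt_top.ne
  refine ⟨2 ^ finrank ℝ V * β.toReal, by positivity, fun z ρ hρ => ?_⟩
  obtain hempty | ⟨v, hvV, hv⟩ := ((V : Set E) ∩ closedBall z ρ).eq_empty_or_nonempty
  · simp [hempty]
  have hsub : (V : Set E) ∩ closedBall z ρ ⊆ V.subtype '' closedBall (⟨v, hvV⟩ : V) (2 * ρ) := by
    rintro w ⟨hwV, hw⟩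
    refine ⟨⟨w, hwV⟩, ?_, rfl⟩
    have := dist_triangle_right w v z
    rw [mem_closedBall] at hv hw
    exact mem_closedBall.2 (by rw [Subtype.dist_eq]; linarith)
  calc _ ≤ μH[finrank ℝ V] (closedBall (⟨v, hvV⟩ : V) (2 * ρ)) :=
        (measure_mono hsub).trans_eq
          (V.subtypeₗᵢ.isometry.hausdorffMeasure_image (Or.inl (by positivity)) _)
    _ = _ := by
        rw [Measure.addHaar_closedBall _ _ (by positivity),
          ← ENNReal.ofReal_toReal (measure_ball_lt_top (μ := μH[finrank ℝ V])).ne,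
          ← ENNReal.ofReal_mul (by positivity)]
        congr 1
        ring

theorem exists_hausdorffMeasure_submodule_inter_thickening_le (V : Submodule ℝ E)
    [FiniteDimensional ℝ V] {ι : Type*} [Fintype ι] {j : ℕ}
    (hj : Fintype.card ι + j = finrank ℝ V) {Φ : (ι → ℝ) → E} (hΦ : ContDiff ℝ 1 Φ)
    {M : ℝ} (hM : 0 ≤ M) :
    ∃ K > 0, ∀ r, 0 < r → r ≤ 1 →
      μH[finrank ℝ V] ((V : Set E) ∩ thickening r (Φ '' closedBall 0 M)) ≤
        ENNReal.ofReal (K * r ^ j) := by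
  obtain ⟨L, hL, hcover⟩ := exists_finset_cover_thickening_image hΦ hM
  obtain ⟨β, hβ, hball⟩ := exists_hausdorffMeasure_submodule_inter_closedBall_le V
  refine ⟨(2 * M + 3) ^ Fintype.card ι * (β * (L + 1) ^ finrank ℝ V), by positivity,
    fun r hr hr1 => ?_⟩
  obtain ⟨t, hcard, ht⟩ := hcover r hr hr1
  calc μH[finrank ℝ V] ((V : Set E) ∩ thickening r (Φ '' closedBall 0 M))
      ≤ μH[finrank ℝ V] (⋃ y ∈ t, (V : Set E) ∩ closedBall (Φ y) ((L + 1) * r)) := by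
        rw [← inter_iUnion₂]
        gcongr
    _ ≤ ∑ _y ∈ t, ENNReal.ofReal (β * ((L + 1) * r) ^ finrank ℝ V) :=
        (measure_biUnion_finset_le _ _).trans
          (Finset.sum_le_sum fun y _ => hball _ _ (by positivity))
    _ = ENNReal.ofReal (t.card * (β * ((L + 1) * r) ^ finrank ℝ V)) := by
        rw [Finset.sum_const, nsmul_eq_mul, ENNReal.ofReal_mul (p := t.card) (Nat.cast_nonneg _),
          ENNReal.ofReal_natCast]
    _ ≤ ENNReal.ofReal (((2 * M + 3) / r) ^ Fintype.card ι *
          (β * ((L + 1) * r) ^ finrank ℝ V)) := by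
        gcongr
    _ = _ := by
        rw [← hj, div_pow, mul_pow, pow_add r]
        field_simp

end TubeVolume

section Coarea

open Module Topology

/-- A radius at which the balls around `x` are usable in the Vitali covering of `W`: the
fivefold ball stays in `W`, the weight `N` oscillates by at most `e` on it, and a map with
Lipschitz constant below `N x + 2 * e` displaces its points by less than `1`. -/
structure IsAdmissibleRadius {X : Type*} [PseudoMetricSpace X] (W : Set X) (N : X → ℝ)
    (e ρ : ℝ) (x : X) (r : ℝ) : Prop where
  pos : 0 < r
  le : r ≤ ρ
  closedBall_subset : closedBall x (5 * r) ⊆ W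
  abs_sub_le : ∀ y ∈ closedBall x (5 * r), |N y - N x| ≤ e
  mul_le_one : (N x + 2 * e) * (5 * r) ≤ 1

lemma exists_isAdmissibleRadius {X : Type*} [PseudoMetricSpace X] {W : Set X} (hW : IsOpen W)
    {N : X → ℝ} (hN : ContinuousOn N W) (hN0 : ∀ x, 0 ≤ N x) {e ρ : ℝ} (he : 0 < e) (hρ : 0 < ρ)
    {x : X} (hx : x ∈ W) :
    ∃ r, IsAdmissibleRadius W N e ρ x r := by
  have hosc : ∀ᶠ y in 𝓝 x, y ∈ W ∧ |N y - N x| ≤ e := by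
    filter_upwards [hW.mem_nhds hx,
      Metric.continuousAt_iff'.1 (hN.continuousAt (hW.mem_nhds hx)) e he] with y hyW hy
    exact ⟨hyW, hy.le⟩
  have hpos : 0 < N x + 2 * e := by linarith [hN0 x]
  have hsmall : ∀ᶠ r in 𝓝[>] (0 : ℝ), closedBall x (5 * r) ⊆ {y | y ∈ W ∧ |N y - N x| ≤ e} := by
    obtain ⟨d, hd, hball⟩ := nhds_basis_closedBall.mem_iff.1 hosc
    filter_upwards [Ioc_mem_nhdsGT (show 0 < d / 5 by positivity)] with r hr
    exact (closedBall_subset_closedBall (by linarith [hr.2])).trans hball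
  obtain ⟨r, hr, hrρ, hr1⟩ := (hsmall.and (inter_mem (Ioc_mem_nhdsGT hρ)
    (Ioc_mem_nhdsGT (show 0 < 1 / (5 * (N x + 2 * e)) by positivity)))).exists
  refine ⟨r, hrρ.1, hrρ.2, fun y hy => (hr hy).1, fun y hy => (hr hy).2, ?_⟩
  have := (le_div_iff₀ (by positivity)).1 hr1.2
  linarith

/-- A Vitali covering of `W`: disjoint closed balls of admissible radii whose fivefold
enlargements cover `W`. -/
structure IsVitaliCover {X : Type*} [PseudoMetricSpace X] (W : Set X) (N : X → ℝ) (e ρ : ℝ)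
    (u : Set X) (r : X → ℝ) : Prop where
  admissible : ∀ x ∈ u, IsAdmissibleRadius W N e ρ x (r x)
  subset_iUnion : W ⊆ ⋃ x ∈ u, closedBall x (5 * r x)
  pairwiseDisjoint : u.PairwiseDisjoint fun x => closedBall x (r x)

lemma IsVitaliCover.countable {X : Type*} [PseudoMetricSpace X] [SecondCountableTopology X]
    {W : Set X} {N : X → ℝ} {e ρ : ℝ} {u : Set X} {r : X → ℝ}
    (h : IsVitaliCover W N e ρ u r) : u.Countable :=
  h.pairwiseDisjoint.countable_of_nonempty_interior fun x hx =>
    ⟨x, ball_subset_interior_closedBall (mem_ball_self (h.admissible x hx).pos)⟩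

lemma IsVitaliCover.tsum_setLIntegral_le {X : Type*} [PseudoMetricSpace X]
    [SecondCountableTopology X] [MeasurableSpace X] [OpensMeasurableSpace X] {W : Set X}
    {N : X → ℝ} {e ρ : ℝ} {u : Set X} {r : X → ℝ} (h : IsVitaliCover W N e ρ u r)
    (μ : Measure X) (f : X → ENNReal) :
    ∑' x : u, ∫⁻ y in closedBall x (r x), f y ∂μ ≤ ∫⁻ y in W, f y ∂μ := by
  have := h.countable.to_subtype
  rw [← lintegral_iUnion (fun _ : u => measurableSet_closedBall)
    fun x y hxy => h.pairwiseDisjoint x.2 y.2 (Subtype.coe_injective.ne hxy)]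
  refine lintegral_mono_set (iUnion_subset fun x => ?_)
  have hx := h.admissible x x.2
  exact (closedBall_subset_closedBall (by linarith [hx.pos])).trans hx.closedBall_subset

lemma exists_isVitaliCover {X : Type*} [PseudoMetricSpace X] {W : Set X} (hW : IsOpen W)
    {N : X → ℝ} (hN : ContinuousOn N W) (hN0 : ∀ x, 0 ≤ N x) {e ρ : ℝ} (he : 0 < e)
    (hρ : 0 < ρ) : ∃ u r, IsVitaliCover W N e ρ u r := by
  choose! r hr using fun x (hx : x ∈ W) => exists_isAdmissibleRadius hW hN hN0 he hρ hx
  obtain ⟨u, huW, hdisj, hcover⟩ :=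
    Vitali.exists_disjoint_subfamily_covering_enlargement_closedBall W (fun x => x) r ρ
      (fun x hx => (hr x hx).le) 5 (by norm_num)
  refine ⟨u, r, fun x hx => hr x (huW hx), fun x hx => ?_, hdisj⟩
  obtain ⟨b, hb, hsub⟩ := hcover x hx
  exact mem_iUnion₂.2 ⟨b, hb, hsub (mem_closedBall_self (hr x hx).pos.le)⟩

lemma hausdorffMeasure_le_liminf_tsum_closedBall {X : Type*} [MetricSpace X] [MeasurableSpace X]
    [BorelSpace X] (d : ℕ) {S : Set X} {u : ℕ → Set X} {R : ℕ → X → ℝ} {ρ : ℕ → ℝ}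
    (hu : ∀ k, (u k).Countable) (hR : ∀ k, ∀ x ∈ u k, R k x ∈ Icc 0 (ρ k))
    (hρ : Tendsto ρ atTop (𝓝 0)) (hS : ∀ k, S ⊆ ⋃ x ∈ u k, closedBall x (R k x)) :
    μH[d] S ≤ liminf (fun k => ∑' x : u k, ENNReal.ofReal ((2 * R k x) ^ d)) atTop := by
  have : ∀ k, Countable (u k) := fun k => (hu k).to_subtype
  have hdiam : ∀ k (x : u k), ediam (closedBall (x : X) (R k x)) ≤ ENNReal.ofReal (2 * R k x) := by
    intro k x
    rw [← closedEBall_ofReal (hR k x x.2).1, ENNReal.ofReal_mul zero_le_two, ENNReal.ofReal_ofNat]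
    exact ediam_closedEBall_le
  refine (Measure.hausdorffMeasure_le_liminf_tsum d S (fun k => ENNReal.ofReal (2 * ρ k)) ?_
    (fun k (x : u k) => closedBall (x : X) (R k x)) ?_ ?_).trans
      (liminf_le_liminf (Eventually.of_forall fun k => ENNReal.tsum_le_tsum fun x => ?_))
  · simpa using ENNReal.tendsto_ofReal (hρ.const_mul 2)
  · refine Eventually.of_forall fun k x => (hdiam k x).trans ?_
    have := (hR k x x.2).2
    gcongr
  · exact Eventually.of_forall fun k => by simpa only [iUnion_coe_set] using hS k
  · rw [ENNReal.ofReal_pow (by linarith [(hR k x x.2).1]), ENNReal.rpow_natCast]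
    exact pow_le_pow_left' (hdiam k x) d

variable {X F : Type*} [AddGroup F]

/-- The translations `Y ∈ B` for which `Q - Y` takes a value in `T` somewhere on `S`. -/
def hittingParams (B : Set F) (Q : X → F) (T : Set F) (S : Set X) : Set F :=
  {Y ∈ B | ∃ y ∈ S, Q y - Y ∈ T}

variable [MeasurableSpace F]

/-- The `d`-dimensional covering sum of `{x | Q x - Y ∈ T}` by those fivefold balls of a
covering that `Y` hits. The hitting sets are replaced by measurable hulls to make it a
measurable function of `Y`. -/
def hittingSum (ν : Measure F) (B : Set F) (Q : X → F) (T : Set F) [PseudoMetricSpace X] (d : ℕ)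
    (u : Set X) (r : X → ℝ) (Y : F) : ENNReal :=
  ∑' x : u, (toMeasurable ν (hittingParams B Q T (closedBall x (5 * r x)))).indicator
    (fun _ => ENNReal.ofReal ((10 * r x) ^ d)) Y

variable {ν : Measure F} {B T : Set F} {Q : X → F} {d : ℕ}

lemma measurable_hittingSum [PseudoMetricSpace X] {u : Set X} (hu : u.Countable) (r : X → ℝ) :
    Measurable (hittingSum ν B Q T d u r) := by
  have := hu.to_subtype
  exact Measurable.tsum fun x => measurable_const.indicator (measurableSet_toMeasurable _ _)

lemma lintegral_hittingSum_le [PseudoMetricSpace X] {u : Set X} (hu : u.Countable) (r : X → ℝ) :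
    ∫⁻ Y in B, hittingSum ν B Q T d u r Y ∂ν ≤
      ∑' x : u, ENNReal.ofReal ((10 * r x) ^ d) *
        ν (hittingParams B Q T (closedBall x (5 * r x))) := by
  have := hu.to_subtype
  unfold hittingSum
  rw [lintegral_tsum]
  · refine ENNReal.tsum_le_tsum fun x => ?_
    rw [lintegral_indicator_const (measurableSet_toMeasurable _ _)]
    exact mul_right_mono ((Measure.restrict_apply_le _ _).trans_eq (measure_toMeasurable _))
  · exact fun x =>
      (measurable_const.indicator (measurableSet_toMeasurable _ _)).aemeasurable

lemma hausdorffMeasure_le_liminf_hittingSum [MetricSpace X] [SecondCountableTopology X]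
    [MeasurableSpace X] [BorelSpace X] {W : Set X} {N : X → ℝ} {e : ℝ} {ρ : ℕ → ℝ}
    (hρ : Tendsto ρ atTop (𝓝 0)) {u : ℕ → Set X} {r : ℕ → X → ℝ}
    (h : ∀ k, IsVitaliCover W N e (ρ k) (u k) (r k)) {Y : F} (hY : Y ∈ B) :
    μH[d] {x ∈ W | Q x - Y ∈ T} ≤
      liminf (fun k => hittingSum ν B Q T d (u k) (r k) Y) atTop := by
  let hit : ℕ → Set X := fun k => {x | Y ∈ hittingParams B Q T (closedBall x (5 * r k x))}
  refine (hausdorffMeasure_le_liminf_tsum_closedBall d (u := fun k => u k ∩ hit k)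
    (R := fun k x => 5 * r k x) (ρ := fun k => 5 * ρ k)
    (fun k => (h k).countable.mono inter_subset_left) (fun k x hx => ?_)
    (by simpa using hρ.const_mul 5) (fun k y hy => ?_)).trans
      (liminf_le_liminf (Eventually.of_forall fun k => ?_))
  · have hx := (h k).admissible x hx.1
    exact ⟨by linarith [hx.pos], by linarith [hx.le]⟩
  · obtain ⟨x, hxu, hyx⟩ := mem_iUnion₂.1 ((h k).subset_iUnion hy.1)
    exact mem_iUnion₂.2 ⟨x, ⟨hxu, hY, y, hyx, hy.2⟩, hyx⟩
  · rw [tsum_subtype (u k ∩ hit k) fun x => ENNReal.ofReal ((2 * (5 * r k x)) ^ d),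
      ← indicator_indicator, ← tsum_subtype]
    refine ENNReal.tsum_le_tsum fun x => ?_
    by_cases hx : (x : X) ∈ hit k
    · rw [indicator_of_mem hx, indicator_of_mem (subset_toMeasurable ν _ hx : Y ∈ _),
        ← mul_assoc]
      norm_num
    · rw [indicator_of_notMem hx]
      exact zero_le

section

variable {E : Type*} [NormedAddCommGroup E] [NormedSpace ℝ E] {W : Set E} {N : E → ℝ}
  {e ρ r K : ℝ} {x : E} {j : ℕ}

lemma measure_hittingParams_closedBall_le {F : Type*} [NormedAddCommGroup F] [NormedSpace ℝ F]
    [MeasurableSpace F] {ν : Measure F} {B T : Set F} {Q : E → F} (hW : IsOpen W)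
    (hQ : DifferentiableOn ℝ Q W) (he : 0 < e)
    (hr : IsAdmissibleRadius W (fun x => ‖fderiv ℝ Q x‖) e ρ x r)
    (hT : ∀ s, 0 < s → s ≤ 1 →
      ν {Y ∈ B | Q x - Y ∈ thickening s T} ≤ ENNReal.ofReal (K * s ^ j)) :
    ν (hittingParams B Q T (closedBall x (5 * r))) ≤
      ENNReal.ofReal (K * ((‖fderiv ℝ Q x‖ + 2 * e) * (5 * r)) ^ j) := by
  have hr0 := hr.pos
  refine (measure_mono ?_).trans (hT _ (by positivity) hr.mul_le_one)
  rintro Y ⟨hYB, y, hy, hyT⟩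
  refine ⟨hYB, mem_thickening_iff.2 ⟨Q y - Y, hyT, ?_⟩⟩
  have hlip := (convex_closedBall x (5 * r)).norm_image_sub_le_of_norm_fderiv_le (𝕜 := ℝ)
    (fun z hz => hQ.differentiableAt (hW.mem_nhds (hr.closedBall_subset hz)))
    (fun z hz => sub_le_iff_le_add'.1 (abs_le.1 (hr.abs_sub_le z hz)).2) hy
    (mem_closedBall_self (by positivity))
  rw [dist_sub_right, dist_eq_norm]
  calc ‖Q x - Q y‖ ≤ (‖fderiv ℝ Q x‖ + e) * ‖x - y‖ := hlip
    _ ≤ (‖fderiv ℝ Q x‖ + e) * (5 * r) := by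
        gcongr
        rw [← dist_eq_norm, dist_comm]
        exact hy
    _ < (‖fderiv ℝ Q x‖ + 2 * e) * (5 * r) := by
        gcongr
        linarith

variable [FiniteDimensional ℝ E] [MeasurableSpace E] [BorelSpace E] {μ : Measure E}
  [μ.IsAddHaarMeasure]

lemma IsAdmissibleRadius.ofReal_mul_le_setLIntegral (hN0 : ∀ x, 0 ≤ N x) (he : 0 < e)
    (hK : 0 ≤ K) (hd : d + j = finrank ℝ E) (hr : IsAdmissibleRadius W N e ρ x r) :
    ENNReal.ofReal ((10 * r) ^ d) * ENNReal.ofReal (K * ((N x + 2 * e) * (5 * r)) ^ j) ≤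
      ENNReal.ofReal (10 ^ d * 5 ^ j * K / μ.real (ball 0 1)) *
        ∫⁻ y in closedBall x r, ENNReal.ofReal ((N y + 3 * e) ^ j) ∂μ := by
  have hr0 := hr.pos
  have hx0 := hN0 x
  have hv : 0 < μ.real (ball 0 1) :=
    ENNReal.toReal_pos (measure_ball_pos _ _ one_pos).ne' measure_ball_lt_top.ne
  have hvol : μ (closedBall x r) = ENNReal.ofReal (r ^ (d + j) * μ.real (ball 0 1)) := by
    rw [Measure.addHaar_closedBall _ _ hr0.le, ENNReal.ofReal_mul (by positivity), hd,
      ofReal_measureReal measure_ball_lt_top.ne]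
  calc _ = ENNReal.ofReal (10 ^ d * 5 ^ j * K / μ.real (ball 0 1)) *
        (ENNReal.ofReal ((N x + 2 * e) ^ j) * μ (closedBall x r)) := by
        rw [hvol, ← ENNReal.ofReal_mul (by positivity), ← ENNReal.ofReal_mul (by positivity),
          ← ENNReal.ofReal_mul (by positivity)]
        congr 1
        simp only [mul_pow, pow_add]
        field_simp
    _ ≤ _ := by
        gcongr
        rw [← setLIntegral_const]
        refine setLIntegral_mono' measurableSet_closedBall fun y hy => ?_
        have := (abs_le.1 (hr.abs_sub_le y (closedBall_subset_closedBall (by linarith) hy))).1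
        gcongr ENNReal.ofReal (?_ ^ j)
        linarith

/- A ball of radius `r` around `x` contributes `r ^ d` for the translations in a tube of radius
`‖fderiv ℝ Q x‖ * r`, whose measure times `r ^ d` is comparable to the integral of
`‖fderiv ℝ Q‖ ^ j` over the ball; Fatou's lemma passes to vanishing radii. -/
theorem lintegral_hausdorffMeasure_preimage_sub_le {F : Type*} [NormedAddCommGroup F]
    [NormedSpace ℝ F] [MeasurableSpace F] {ν : Measure F} {B T : Set F} {Q : E → F}
    (hW : IsOpen W) (hQ : ContDiffOn ℝ 1 Q W) (hB : MeasurableSet B)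
    (hd : d + j = finrank ℝ E) (hK : 0 ≤ K)
    (hT : ∀ x ∈ W, ∀ s, 0 < s → s ≤ 1 →
      ν {Y ∈ B | Q x - Y ∈ thickening s T} ≤ ENNReal.ofReal (K * s ^ j))
    {ε : ℝ} (hε : 0 < ε) :
    ∫⁻ Y in B, μH[d] {x ∈ W | Q x - Y ∈ T} ∂ν ≤
      ENNReal.ofReal (10 ^ d * 5 ^ j * K / μ.real (ball 0 1)) *
        ∫⁻ x in W, ENNReal.ofReal ((‖fderiv ℝ Q x‖ + ε) ^ j) ∂μ := by
  have := FiniteDimensional.proper_real E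
  have he : 0 < ε / 3 := by positivity
  have hN : ContinuousOn (fun x => ‖fderiv ℝ Q x‖) W :=
    (hQ.continuousOn_fderiv_of_isOpen hW le_rfl).norm
  choose u r hcover using fun k : ℕ =>
    exists_isVitaliCover hW hN (fun x => norm_nonneg _) he (Nat.one_div_pos_of_nat (n := k))
  have hsum : ∀ k, ∫⁻ Y in B, hittingSum ν B Q T d (u k) (r k) Y ∂ν ≤
      ENNReal.ofReal (10 ^ d * 5 ^ j * K / μ.real (ball 0 1)) *
        ∫⁻ x in W, ENNReal.ofReal ((‖fderiv ℝ Q x‖ + ε) ^ j) ∂μ := by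
    intro k
    refine (lintegral_hittingSum_le (hcover k).countable _).trans ((ENNReal.tsum_le_tsum
      fun x => ?_).trans (ENNReal.tsum_mul_left.trans_le
        (mul_right_mono ((hcover k).tsum_setLIntegral_le _ _))))
    have hx := (hcover k).admissible x x.2
    have hxW : (x : E) ∈ W := hx.closedBall_subset (mem_closedBall_self (by linarith [hx.pos]))
    rw [← mul_div_cancel₀ ε (three_ne_zero' ℝ)]
    exact (mul_right_mono (measure_hittingParams_closedBall_le hW (hQ.differentiableOn one_ne_zero)
      he hx (hT x hxW))).trans (hx.ofReal_mul_le_setLIntegral (fun x => norm_nonneg _) he hK hd)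
  calc ∫⁻ Y in B, μH[d] {x ∈ W | Q x - Y ∈ T} ∂ν
      ≤ ∫⁻ Y in B, liminf (fun k => hittingSum ν B Q T d (u k) (r k) Y) atTop ∂ν :=
        setLIntegral_mono' hB fun Y hY => hausdorffMeasure_le_liminf_hittingSum
          tendsto_one_div_add_atTop_nhds_zero_nat hcover hY
    _ ≤ liminf (fun k => ∫⁻ Y in B, hittingSum ν B Q T d (u k) (r k) Y ∂ν) atTop :=
        lintegral_liminf_le fun k => measurable_hittingSum (hcover k).countable _
    _ ≤ _ := (liminf_le_liminf (Eventually.of_forall hsum)).trans_eq (liminf_const _)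

end

end Coarea

section QTensors

open Module Real

/-- `Sym0E` as a linear subspace. -/
def sym0 : Submodule ℝ E9 where
  carrier := Sym0E
  add_mem' {A B} hA hB := ⟨hA.1.add hB.1, (trace_add (toM A) (toM B)).trans (by simp [hA.2, hB.2])⟩
  zero_mem' := ⟨isSymm_zero, trace_zero _ _⟩
  smul_mem' t A hA := ⟨hA.1.smul t, (trace_smul t (toM A)).trans (by simp [hA.2])⟩

lemma mem_Sym0E_iff {A : E9} :
    A ∈ Sym0E ↔ (∀ i j, A (i, j) = A (j, i)) ∧
      A (0, 0) + A (1, 1) + A (2, 2) = 0 :=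
  and_congr ⟨fun h i j => h.apply j i, fun h => IsSymm.ext fun i j => h j i⟩
    (by rw [trace_fin_three]; rfl)

/-- The coordinates `A₀₀, A₁₁, A₀₁, A₀₂, A₁₂` on `sym0`. -/
def sym0Equiv : sym0 ≃ₗ[ℝ] (Fin 5 → ℝ) where
  toFun A := ![A.1 (0, 0), A.1 (1, 1), A.1 (0, 1), A.1 (0, 2), A.1 (1, 2)]
  map_add' A B := by ext i; fin_cases i <;> rfl
  map_smul' t A := by ext i; fin_cases i <;> rfl
  invFun w := ⟨WithLp.toLp 2 fun p =>
      !![w 0, w 2, w 3; w 2, w 1, w 4; w 3, w 4, -w 0 - w 1] p.1 p.2, mem_Sym0E_iff.2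
        ⟨fun i j => by fin_cases i <;> fin_cases j <;> rfl, by simp⟩⟩
  left_inv A := by
    obtain ⟨hsymm, htrace⟩ := mem_Sym0E_iff.1 A.2
    have h22 : -A.1 (0, 0) - A.1 (1, 1) = A.1 (2, 2) := by linarith
    ext ⟨i, j⟩
    fin_cases i <;> fin_cases j <;> first | rfl | exact hsymm _ _ | exact h22
  right_inv w := by ext i; fin_cases i <;> rfl

lemma finrank_sym0 : finrank ℝ sym0 = 5 := by
  rw [sym0Equiv.finrank_eq, finrank_fin_fun]

lemma unitVec_iff_dotProduct_self {n : Fin 3 → ℝ} : unitVec n ↔ n ⬝ᵥ n = 1 := by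
  simp only [unitVec, dotProduct, sq]

lemma unitVec_vertical : unitVec ![0, 0, 1] := by
  simp [unitVec, Fin.sum_univ_three]

lemma abs_dotProduct_toM_mulVec_le (A : E9) {u v : Fin 3 → ℝ} (hu : unitVec u) (hv : unitVec v) :
    |u ⬝ᵥ toM A *ᵥ v| ≤ ‖A‖ := by
  let uv : E9 := WithLp.toLp 2 fun p => u p.1 * v p.2
  have huv : ‖uv‖ = 1 := by
    rw [EuclideanSpace.norm_eq, Real.sqrt_eq_one]
    calc ∑ p, ‖uv p‖ ^ 2 = (∑ i, u i ^ 2) * ∑ j, v j ^ 2 := by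
          simp only [uv, norm_mul, mul_pow, Real.norm_eq_abs, sq_abs, Fintype.sum_prod_type,
            Finset.sum_mul_sum]
      _ = 1 := by rw [hu, hv, one_mul]
  have hinner : u ⬝ᵥ toM A *ᵥ v = inner ℝ uv A := by
    simp only [dotProduct, mulVec, toM, of_apply, PiLp.inner_apply, RCLike.inner_apply,
      conj_trivial, Fintype.sum_prod_type, Finset.mul_sum, uv]
    exact Finset.sum_congr rfl fun i _ => Finset.sum_congr rfl fun j _ => by ring
  rw [hinner]
  simpa [huv] using abs_real_inner_le_norm uv A

/-- Traceless symmetric matrices having `n = (cos θ, sin θ, 0)` as an eigenvector, in the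
coordinates `w = (θ, λ, μ, ν)`: with `m = (-sin θ, cos θ, 0)`, the matrix is
`λ n⊗n + μ m⊗m - (λ + μ) e₃⊗e₃ + ν (m⊗e₃ + e₃⊗m)`. -/
def horizontalEigenParam (w : Fin 4 → ℝ) : E9 := WithLp.toLp 2 fun p =>
  let n := ![cos (w 0), sin (w 0), 0]
  let m := ![-sin (w 0), cos (w 0), 0]
  let e := ![0, 0, 1]
  w 1 * (n p.1 * n p.2) + w 2 * (m p.1 * m p.2) + (-w 1 - w 2) * (e p.1 * e p.2) +
    w 3 * (m p.1 * e p.2 + e p.1 * m p.2)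

lemma contDiff_horizontalEigenParam : ContDiff ℝ 1 horizontalEigenParam := by
  refine contDiff_euclidean.2 fun ⟨i, j⟩ => ?_
  fin_cases i <;> fin_cases j <;>
    simp only [horizontalEigenParam, Fin.reduceFinMk, Fin.zero_eta, Fin.mk_one, cons_val] <;>
    fun_prop

lemma exists_cos_sin_eq {c s : ℝ} (h : c ^ 2 + s ^ 2 = 1) :
    ∃ θ, |θ| ≤ π ∧ c = cos θ ∧ s = sin θ := by
  have hnorm : ‖(⟨c, s⟩ : ℂ)‖ = 1 := by
    rw [Complex.norm_eq_sqrt_sq_add_sq, h, sqrt_one]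
  refine ⟨Complex.arg ⟨c, s⟩, Complex.abs_arg_le_pi _, ?_, ?_⟩
  · simpa [hnorm] using (Complex.norm_mul_cos_arg ⟨c, s⟩).symm
  · simpa [hnorm] using (Complex.norm_mul_sin_arg ⟨c, s⟩).symm

lemma eq_horizontalEigenParam {A : E9} (hA : A ∈ Sym0E) {θ lam : ℝ}
    (h : IsEigen (toM A) lam ![cos θ, sin θ, 0]) :
    A = horizontalEigenParam ![θ, lam, ![-sin θ, cos θ, 0] ⬝ᵥ toM A *ᵥ ![-sin θ, cos θ, 0],
      ![0, 0, 1] ⬝ᵥ toM A *ᵥ ![-sin θ, cos θ, 0]] := by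
  have h01 : A (0, 1) = A (1, 0) := hA.1.apply 1 0
  have h02 : A (0, 2) = A (2, 0) := hA.1.apply 2 0
  have h12 : A (1, 2) = A (2, 1) := hA.1.apply 2 1
  have htrace := (trace_fin_three _).symm.trans hA.2
  simp only [toM, of_apply] at htrace
  have hcs := sin_sq_add_cos_sq θ
  have hrow0 := congrFun h 0
  have hrow1 := congrFun h 1
  have hrow2 := congrFun h 2
  simp only [mulVec, dotProduct, toM, Fin.isValue, of_apply, Fin.sum_univ_three, cons_val_zero,
    cons_val_one, cons_val, mul_zero, add_zero, Pi.smul_apply, smul_eq_mul]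
    at hrow0 hrow1 hrow2
  ext ⟨i, j⟩
  fin_cases i <;> fin_cases j <;>
    simp only [horizontalEigenParam, toM, mulVec, dotProduct, Fin.sum_univ_three, Fin.reduceFinMk,
      Fin.zero_eta, Fin.mk_one, of_apply, cons_val] <;> grind

lemma TsetE_inter_closedBall_subset {R : ℝ} (hR : 0 ≤ R) :
    TsetE ∩ closedBall 0 R ⊆ horizontalEigenParam '' closedBall 0 (R + 4) := by
  rintro A ⟨⟨hA, -, lam, n, ⟨⟨hn, hlam, -⟩, -⟩, hn2⟩, hAR⟩
  obtain ⟨θ, hθ, hcos, hsin⟩ := exists_cos_sin_eq (c := n 0) (s := n 1)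
    (by simpa [unitVec, Fin.sum_univ_three, hn2] using hn)
  obtain rfl : n = ![cos θ, sin θ, 0] := by
    ext i
    fin_cases i <;> simp [hcos, hsin, hn2]
  refine ⟨_, ?_, (eq_horizontalEigenParam hA hlam).symm⟩
  rw [mem_closedBall_zero_iff] at hAR ⊢
  have hm : unitVec ![-sin θ, cos θ, 0] := by simp [unitVec, Fin.sum_univ_three]
  have hlam_le : |lam| ≤ ‖A‖ := by
    have := abs_dotProduct_toM_mulVec_le A hn hn
    rwa [hlam, dotProduct_smul, unitVec_iff_dotProduct_self.1 hn, smul_eq_mul, mul_one] at this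
  have hμ := abs_dotProduct_toM_mulVec_le A hm hm
  have hν := abs_dotProduct_toM_mulVec_le A unitVec_vertical hm
  refine (pi_norm_le_iff_of_nonneg (by positivity)).2 fun i => ?_
  rw [Real.norm_eq_abs]
  fin_cases i
  · exact hθ.trans (by linarith [pi_le_four])
  · exact hlam_le.trans (by linarith)
  · exact hμ.trans (by linarith)
  · exact hν.trans (by linarith)

theorem exists_hausdorffMeasure_setOf_sub_mem_thickening_TsetE_le {R : ℝ} (hR : 0 ≤ R) :
    ∃ K > 0, ∀ P ∈ Sym0E, ∀ r, 0 < r → r ≤ 1 →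
      μH[5] {Y ∈ Sym0E | P - Y ∈ thickening r (TsetE ∩ closedBall 0 R)} ≤
        ENNReal.ofReal (K * r) := by
  obtain ⟨K, hK, htube⟩ := exists_hausdorffMeasure_submodule_inter_thickening_le sym0 (j := 1)
    (by simp [finrank_sym0]) contDiff_horizontalEigenParam (show 0 ≤ R + 4 by positivity)
  simp only [finrank_sym0, pow_one, Nat.cast_ofNat] at htube
  refine ⟨K, hK, fun P hP r hr hr1 => ?_⟩
  calc μH[5] {Y ∈ Sym0E | P - Y ∈ thickening r (TsetE ∩ closedBall 0 R)}
      ≤ μH[5] (IsometryEquiv.subLeft P ⁻¹'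
          (sym0 ∩ thickening r (horizontalEigenParam '' closedBall 0 (R + 4)))) :=
        measure_mono fun Y hY => ⟨sym0.sub_mem hP hY.1,
          thickening_subset_of_subset r (TsetE_inter_closedBall_subset hR) hY.2⟩
    _ = μH[5] (sym0 ∩ thickening r (horizontalEigenParam '' closedBall 0 (R + 4))) :=
        IsometryEquiv.hausdorffMeasure_preimage _ _ _
    _ ≤ ENNReal.ofReal (K * r) := htube r hr hr1

end QTensors

section Alignment

lemma toM_surjective : Function.Surjective toM := fun M => ⟨WithLp.toLp 2 fun p => M p.1 p.2, rfl⟩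

lemma toM_sub (A B : E9) : toM (A - B) = toM A - toM B := rfl

lemma dotProduct_mulVec_le_of_forall_eigenvalue_le {ι : Type*} [Fintype ι] {A : Matrix ι ι ℝ}
    (hA : A.IsHermitian) {lam : ℝ}
    (hlam : ∀ (μ : ℝ) (v : ι → ℝ), v ≠ 0 → A *ᵥ v = μ • v → μ ≤ lam) (v : ι → ℝ) :
    v ⬝ᵥ A *ᵥ v ≤ lam * (v ⬝ᵥ v) := by
  classical
  have hherm : (lam • (1 : Matrix ι ι ℝ) - A).IsHermitian :=
    (isHermitian_one.smul (IsSelfAdjoint.all lam)).sub hA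
  have hpos : (lam • (1 : Matrix ι ι ℝ) - A).PosSemidef := by
    refine hherm.posSemidef_iff_eigenvalues_nonneg.2 fun i => ?_
    have heig := hherm.mulVec_eigenvectorBasis i
    have hne : (hherm.eigenvectorBasis i).ofLp ≠ 0 :=
      (WithLp.ofLp_eq_zero 2).not.2 (hherm.eigenvectorBasis.orthonormal.ne_zero i)
    rw [sub_mulVec, smul_mulVec, one_mulVec, sub_eq_iff_eq_add, ← sub_eq_iff_eq_add',
      ← sub_smul] at heig
    exact sub_le_self_iff lam |>.1 (hlam _ _ hne heig.symm)
  have hquad := hpos.dotProduct_mulVec_nonneg v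
  rwa [star_trivial, sub_mulVec, smul_mulVec, one_mulVec, dotProduct_sub, dotProduct_smul,
    smul_eq_mul, sub_nonneg] at hquad

lemma dotProduct_uniax_mulVec (s : ℝ) (n : Fin 3 → ℝ) {v : Fin 3 → ℝ} (hv : unitVec v) :
    v ⬝ᵥ uniax s n *ᵥ v = s * ((n ⬝ᵥ v) ^ 2 - 1 / 3) := by
  rw [uniax, smul_mulVec, sub_mulVec, vecMulVec_mulVec, smul_mulVec, one_mulVec, dotProduct_smul,
    dotProduct_sub, dotProduct_smul, dotProduct_smul, unitVec_iff_dotProduct_self.1 hv,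
    dotProduct_comm v n]
  simp [sq]

lemma abs_dotProduct_toM_mulVec_sub_le (Q : E9) {U : E9} {s : ℝ} {n v : Fin 3 → ℝ}
    (hU : toM U = uniax s n) (hv : unitVec v) :
    |v ⬝ᵥ toM Q *ᵥ v - s * ((n ⬝ᵥ v) ^ 2 - 1 / 3)| ≤ ‖Q - U‖ := by
  rw [← dotProduct_uniax_mulVec s n hv, ← hU, ← dotProduct_sub, ← sub_mulVec, ← toM_sub]
  exact abs_dotProduct_toM_mulVec_le _ hv hv

lemma vertical_dotProduct_toM_mulVec (A : E9) : ![0, 0, 1] ⬝ᵥ toM A *ᵥ ![0, 0, 1] = A (2, 2) := by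
  simp [toM, mulVec, dotProduct, Fin.sum_univ_three]

/- The Rayleigh quotient of `A` at `n` is at most the one at its principal eigenvector `m`, and
replacing `A` by the uniaxial tensor `U` changes either by at most `‖A - U‖`. -/
lemma mul_one_sub_sq_dotProduct_le_of_maxEigen {A U : E9} (hA : (toM A).IsSymm) {s lam : ℝ}
    {n m : Fin 3 → ℝ} (hn : unitVec n) (hU : toM U = uniax s n) (hm : MaxEigen (toM A) lam m) :
    s * (1 - (n ⬝ᵥ m) ^ 2) ≤ 2 * ‖A - U‖ := by
  have hrayleigh : n ⬝ᵥ toM A *ᵥ n ≤ lam := by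
    simpa [unitVec_iff_dotProduct_self.1 hn] using dotProduct_mulVec_le_of_forall_eigenvalue_le
      (isHermitian_iff_isSymm.2 hA) hm.2.2 n
  have hlam : m ⬝ᵥ toM A *ᵥ m = lam := by
    rw [hm.2.1, dotProduct_smul, unitVec_iff_dotProduct_self.1 hm.1, smul_eq_mul, mul_one]
  have hn_near := abs_le.1 (abs_dotProduct_toM_mulVec_sub_le A hU hn)
  have hm_near := abs_le.1 (abs_dotProduct_toM_mulVec_sub_le A hU hm.1)
  rw [unitVec_iff_dotProduct_self.1 hn] at hn_near
  linarith [hn_near.1, hm_near.2]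

lemma sq_apply_two_add_sq_dotProduct_le_one {n m : Fin 3 → ℝ} (hn : unitVec n) (hm : unitVec m)
    (hm2 : m 2 = 0) : n 2 ^ 2 + (n ⬝ᵥ m) ^ 2 ≤ 1 := by
  simp only [unitVec, dotProduct, Fin.sum_univ_three, hm2] at hn hm ⊢
  have hlagrange : n 2 ^ 2 + (n 0 * m 0 + n 1 * m 1 + n 2 * 0) ^ 2 +
      (n 0 * m 1 - n 1 * m 0) ^ 2 = 1 := by
    linear_combination hn + (n 0 ^ 2 + n 1 ^ 2) * hm
  linarith [sq_nonneg (n 0 * m 1 - n 1 * m 0)]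

lemma NsetE_nonempty (s : ℝ) : (NsetE s).Nonempty :=
  let ⟨U, hU⟩ := toM_surjective (uniax s ![0, 0, 1])
  ⟨U, _, unitVec_vertical, hU⟩

lemma exists_unitVec_dist_lt {Q : E9} {s δ : ℝ} (hQ : infDist Q (NsetE s) < δ) :
    ∃ U n, unitVec n ∧ toM U = uniax s n ∧ ‖Q - U‖ < δ := by
  obtain ⟨U, ⟨n, hn, hU⟩, hQU⟩ := (infDist_lt_iff (NsetE_nonempty s)).1 hQ
  exact ⟨U, n, hn, hU, by rwa [← dist_eq_norm]⟩

lemma apply_two_two_lt_of_sub_mem_TsetE {Q Y : E9} {s δ α : ℝ} (hs : 0 ≤ s)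
    (hαδ : 3 * δ + 2 * α ≤ 2 * s / 3) (hQ : infDist Q (NsetE s) < δ) (hY : ‖Y‖ < α)
    (hT : Q - Y ∈ TsetE) : Q (2, 2) < s / 3 := by
  obtain ⟨U, n, hn, hU, hQU⟩ := exists_unitVec_dist_lt hQ
  obtain ⟨hsym, -, lam, m, ⟨hm, -⟩, hm2⟩ := hT
  have hnorm : ‖Q - Y - U‖ < δ + α := by
    rw [sub_right_comm]
    linarith [norm_sub_le (Q - U) Y]
  have halign := mul_one_sub_sq_dotProduct_le_of_maxEigen hsym.1 hn hU hm
  have hhoriz := mul_le_mul_of_nonneg_left (sq_apply_two_add_sq_dotProduct_le_one hn hm.1 hm2) hs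
  have hQ22 := (abs_le.1 (abs_dotProduct_toM_mulVec_sub_le Q hU unitVec_vertical)).2
  rw [vertical_dotProduct_toM_mulVec, show n ⬝ᵥ ![0, 0, 1] = n 2 by
    simp [dotProduct, Fin.sum_univ_three]] at hQ22
  linarith

lemma norm_sq_eq_trace (A : E9) : ‖A‖ ^ 2 = (toM A * (toM A)ᵀ).trace := by
  rw [EuclideanSpace.norm_sq_eq, Fintype.sum_prod_type]
  simp only [Real.norm_eq_abs, abs_mul_abs_self, trace, diag_apply, mul_apply, transpose_apply, toM,
    of_apply, sq]

lemma norm_le_of_mem_NsetE {s : ℝ} (hs : 0 ≤ s) {U : E9} (hU : U ∈ NsetE s) : ‖U‖ ≤ s := by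
  obtain ⟨n, hn, hU⟩ := hU
  have hnorm : ‖U‖ ^ 2 = 2 / 3 * s ^ 2 := by
    rw [norm_sq_eq_trace, hU]
    rw [unitVec, Fin.sum_univ_three] at hn
    simp only [uniax, trace, diag_apply, mul_apply, transpose_apply, vecMulVec, Matrix.smul_apply,
      Matrix.sub_apply, of_apply, one_apply, smul_eq_mul, Fin.sum_univ_three, Fin.reduceEq,
      ↓reduceIte]
    linear_combination s ^ 2 * (n 0 ^ 2 + n 1 ^ 2 + n 2 ^ 2 + 1 / 3) * hn
  exact (abs_le_of_sq_le_sq' (by linarith [sq_nonneg s]) hs).2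

lemma norm_sub_le_of_infDist_NsetE_lt {Q Y : E9} {s δ α : ℝ} (hs : 0 ≤ s)
    (hQ : infDist Q (NsetE s) < δ) (hY : ‖Y‖ < α) : ‖Q - Y‖ ≤ s + δ + α := by
  obtain ⟨U, n, hn, hU, hQU⟩ := exists_unitVec_dist_lt hQ
  have hU_le := norm_le_of_mem_NsetE hs ⟨n, hn, hU⟩
  calc ‖Q - Y‖ ≤ ‖Q‖ + ‖Y‖ := norm_sub_le _ _
    _ ≤ ‖U‖ + ‖Q - U‖ + ‖Y‖ := by gcongr; exact norm_le_insert' Q U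
    _ ≤ s + δ + α := by gcongr

end Alignment

section Energy

lemma exists_mem_orthogonalGroup_col_eq {ι : Type*} [Fintype ι] [DecidableEq ι] {n : ι → ℝ}
    (hn : n ⬝ᵥ n = 1) (k : ι) : ∃ U ∈ orthogonalGroup ι ℝ, U.col k = n := by
  have horth : Orthonormal ℝ (({k} : Set ι).domRestrict fun _ => WithLp.toLp 2 n) := by
    refine ⟨fun _ => ?_, fun i j hij => absurd (Subsingleton.elim i j) hij⟩
    rw [domRestrict_apply, EuclideanSpace.norm_eq, Real.sqrt_eq_one]
    simpa [dotProduct, sq] using hn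
  obtain ⟨b, hb⟩ := horth.exists_orthonormalBasis_extension_of_card_eq finrank_euclideanSpace
  refine ⟨(EuclideanSpace.basisFun ι ℝ).toBasis.toMatrix b,
    OrthonormalBasis.toMatrix_orthonormalBasis_mem_orthogonal _ b, ?_⟩
  ext i
  simp [Module.Basis.toMatrix_apply, hb k rfl]

lemma trace_mul_mul_transpose {ι : Type*} [Fintype ι] [DecidableEq ι] {U : Matrix ι ι ℝ}
    (hU : U ∈ orthogonalGroup ι ℝ) (A : Matrix ι ι ℝ) : (U * A * Uᵀ).trace = A.trace := by
  rw [trace_mul_comm, ← mul_assoc, (mem_orthogonalGroup_iff' ι ℝ).1 hU, one_mul]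

lemma fLdG_mul_mul_transpose (a b c C : ℝ) {U : Mat3} (hU : U ∈ orthogonalGroup (Fin 3) ℝ)
    (Q : Mat3) : fLdG a b c C (U * Q * Uᵀ) = fLdG a b c C Q := by
  have hmul : ∀ A B : Mat3, U * A * Uᵀ * (U * B * Uᵀ) = U * (A * B) * Uᵀ := fun A B => by
    calc U * A * Uᵀ * (U * B * Uᵀ) = U * A * (Uᵀ * U) * B * Uᵀ := by simp only [mul_assoc]
      _ = U * (A * B) * Uᵀ := by
        rw [(mem_orthogonalGroup_iff' (Fin 3) ℝ).1 hU, mul_one, mul_assoc U A B]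
  simp only [fLdG, hmul, trace_mul_mul_transpose hU]

lemma exists_forall_le_quartic {c : ℝ} (hc : 0 < c) (p q l : ℝ) :
    ∃ M, ∀ t : ℝ, M ≤ c * t ^ 4 - p * t ^ 3 - q * t ^ 2 - l * t := by
  let r := q + p ^ 2 / (2 * c) + 1 / 2
  refine ⟨-(r ^ 2 / (2 * c)) - l ^ 2 / 2, fun t => ?_⟩
  have hsos : c * t ^ 4 - p * t ^ 3 - q * t ^ 2 - l * t =
      t ^ 2 * (c * t - p) ^ 2 / (2 * c) + (c * t ^ 2 - r) ^ 2 / (2 * c) + (t - l) ^ 2 / 2 +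
        (-(r ^ 2 / (2 * c)) - l ^ 2 / 2) := by
    simp only [r]
    field_simp
    ring
  rw [hsos, le_add_iff_nonneg_left]
  positivity

lemma abs_trace_mul_mul_le (A : E9) : |(toM A * toM A * toM A).trace| ≤ 27 * ‖A‖ ^ 3 := by
  have hentry : ∀ i j k, |A (i, j) * A (j, k) * A (k, i)| ≤ ‖A‖ ^ 3 := fun i j k => by
    rw [abs_mul, abs_mul, pow_three']
    gcongr <;> exact PiLp.norm_apply_le A _
  have htrace : (toM A * toM A * toM A).trace =
      ∑ i, ∑ k, ∑ j, A (i, j) * A (j, k) * A (k, i) := by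
    simp [trace, mul_apply, toM, Finset.sum_mul]
  calc |(toM A * toM A * toM A).trace|
      ≤ ∑ i : Fin 3, ∑ k : Fin 3, ∑ j : Fin 3, ‖A‖ ^ 3 := by
        rw [htrace]
        refine Finset.abs_sum_le_sum_abs _ _ |>.trans (Finset.sum_le_sum fun i _ => ?_)
        refine Finset.abs_sum_le_sum_abs _ _ |>.trans (Finset.sum_le_sum fun k _ => ?_)
        exact Finset.abs_sum_le_sum_abs _ _ |>.trans (Finset.sum_le_sum fun j _ => hentry i j k)
    _ = 27 * ‖A‖ ^ 3 := by norm_num [← mul_assoc]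

lemma le_fLdG (a b c C : ℝ) {P : E9} (hP : (toM P).IsSymm) :
    C - a / 2 * ‖P‖ ^ 2 - 9 * |b| * ‖P‖ ^ 3 + c / 4 * ‖P‖ ^ 4 ≤ fLdG a b c C (toM P) := by
  have hsq : (toM P * toM P).trace = ‖P‖ ^ 2 := by rw [norm_sq_eq_trace, hP.eq]
  have hcube : b / 3 * (toM P * toM P * toM P).trace ≤ 9 * |b| * ‖P‖ ^ 3 :=
    calc b / 3 * (toM P * toM P * toM P).trace
        ≤ |b / 3| * |(toM P * toM P * toM P).trace| := (le_abs_self _).trans (abs_mul _ _).le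
      _ ≤ |b| / 3 * (27 * ‖P‖ ^ 3) := by
        rw [abs_div, abs_of_pos (show (0 : ℝ) < 3 by norm_num)]
        gcongr
        exact abs_trace_mul_mul_le P
      _ = 9 * |b| * ‖P‖ ^ 3 := by ring
  rw [fLdG, hsq, ← pow_mul]
  linarith

lemma bddBelow_fLdG_add_gMagE (a b C s : ℝ) {c ξ η : ℝ} (hc : 0 < c) (hξ : 0 < ξ) :
    BddBelow {v | ∃ P ∈ Sym0E,
      v = 1 / ξ ^ 2 * fLdG a b c C (toM P) + 1 / η ^ 2 * gMagE s P} := by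
  obtain ⟨M, hM⟩ := exists_forall_le_quartic (c := 1 / ξ ^ 2 * (c / 4)) (by positivity)
    (1 / ξ ^ 2 * (9 * |b|)) (1 / ξ ^ 2 * (a / 2)) (1 / η ^ 2)
  refine ⟨1 / ξ ^ 2 * C + 1 / η ^ 2 * (2 / 3 * s) + M, ?_⟩
  rintro _ ⟨P, hP, rfl⟩
  have hbulk := mul_le_mul_of_nonneg_left (le_fLdG a b c C hP.1) (by positivity : 0 ≤ 1 / ξ ^ 2)
  have hentry : P (2, 2) ≤ ‖P‖ := (le_abs_self _).trans (PiLp.norm_apply_le P _)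
  have hmag : 1 / η ^ 2 * (2 / 3 * s - ‖P‖) ≤ 1 / η ^ 2 * gMagE s P := by
    rw [gMagE]
    gcongr
  linarith [hM ‖P‖]

lemma sStar_pos (a : ℝ) {b c : ℝ} (hb : 0 < b) (hc : 0 < c) : 0 < sStar a b c := by
  unfold sStar
  positivity

/-- The constant `C₀(ξ, η)` of a general bulk potential `f`; the infimum is meaningful when
`(1/ξ²) f + (1/η²) g` is bounded below on `Sym0E`. -/
def groundEnergyShift (f : Mat3 → ℝ) (s ξ η : ℝ) : ℝ :=
  -sInf {v | ∃ P ∈ Sym0E, v = 1 / ξ ^ 2 * f (toM P) + 1 / η ^ 2 * gMagE s P}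

/-- The integrand of `𝓔_{η,ξ}` for a general bulk potential `f`. -/
def energyDensity (f : Mat3 → ℝ) (s ξ η : ℝ) (Ω : Set V3) (Q : V3 → E9) (x : V3) : ℝ :=
  1 / 2 * ∑ i : Fin 3, ‖fderivWithin ℝ Q Ω x (EuclideanSpace.single i (1 : ℝ))‖ ^ 2 +
    1 / ξ ^ 2 * f (toM (Q x)) + 1 / η ^ 2 * gMagE s (Q x) + groundEnergyShift f s ξ η

lemma exists_toM_eq_mul_mul_transpose_vertical {Q : E9} (hQ : Q ∈ Sym0E) {n : Fin 3 → ℝ}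
    (hn : unitVec n) : ∃ P ∈ Sym0E, (∃ U ∈ orthogonalGroup (Fin 3) ℝ, toM P = U * toM Q * Uᵀ) ∧
      P (2, 2) = n ⬝ᵥ toM Q *ᵥ n := by
  obtain ⟨U, hU, hcol⟩ := exists_mem_orthogonalGroup_col_eq (unitVec_iff_dotProduct_self.1 hn) 2
  have hUt : Uᵀ ∈ orthogonalGroup (Fin 3) ℝ := Unitary.star_mem hU
  obtain ⟨P, hP⟩ := toM_surjective (Uᵀ * toM Q * Uᵀᵀ)
  refine ⟨P, ⟨?_, ?_⟩, ⟨Uᵀ, hUt, hP⟩, ?_⟩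
  · rw [hP, IsSymm, transpose_mul, transpose_mul, hQ.1.eq, transpose_transpose, mul_assoc]
  · rw [hP, trace_mul_mul_transpose hUt, hQ.2]
  · calc P (2, 2) = (Uᵀ * toM Q * U) 2 2 := congrFun (congrFun hP 2) 2
      _ = n ⬝ᵥ toM Q *ᵥ n := by
        rw [← hcol, mul_assoc]
        rfl

variable {f : Mat3 → ℝ} {s : ℝ}

/- Rotating `Q` so that its approximate director becomes vertical keeps `f` and lowers the magnetic
energy, which bounds the potential energy of a tilted `Q` from below. -/
lemma le_potential_add_groundEnergyShift
    (hf : ∀ U ∈ orthogonalGroup (Fin 3) ℝ, ∀ A, f (U * A * Uᵀ) = f A) {ξ η δ : ℝ}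
    (hbdd : BddBelow {v | ∃ P ∈ Sym0E, v = 1 / ξ ^ 2 * f (toM P) + 1 / η ^ 2 * gMagE s P})
    (hδ : δ ≤ s / 6) {Q : E9} (hQ : Q ∈ Sym0E) (hQδ : infDist Q (NsetE s) < δ)
    (hQ22 : Q (2, 2) < s / 3) :
    1 / η ^ 2 * (s / 6) ≤
      1 / ξ ^ 2 * f (toM Q) + 1 / η ^ 2 * gMagE s Q + groundEnergyShift f s ξ η := by
  obtain ⟨V, n, hn, hV, hQV⟩ := exists_unitVec_dist_lt hQδ
  obtain ⟨P, hP, ⟨U, hU, hPU⟩, hP22⟩ := exists_toM_eq_mul_mul_transpose_vertical hQ hn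
  have hP22_ge : s / 2 ≤ P (2, 2) := by
    have hnear := (abs_le.1 (abs_dotProduct_toM_mulVec_sub_le Q hV hn)).1
    rw [unitVec_iff_dotProduct_self.1 hn] at hnear
    linarith
  have hmag : 1 / η ^ 2 * (s / 6) ≤ 1 / η ^ 2 * (gMagE s Q - gMagE s P) := by
    gcongr
    simp only [gMagE]
    linarith
  have hinf := csInf_le hbdd ⟨P, hP, rfl⟩
  rw [hPU, hf U hU] at hinf
  rw [groundEnergyShift]
  linarith

lemma sq_opNorm_le_sum_sq_norm_apply {𝕜 ι E F : Type*} [RCLike 𝕜] [Fintype ι]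
    [NormedAddCommGroup E] [InnerProductSpace 𝕜 E] [SeminormedAddCommGroup F] [NormedSpace 𝕜 F]
    (b : OrthonormalBasis ι 𝕜 E) (D : E →L[𝕜] F) : ‖D‖ ^ 2 ≤ ∑ i, ‖D (b i)‖ ^ 2 := by
  have hsum : 0 ≤ ∑ i, ‖D (b i)‖ ^ 2 := Finset.sum_nonneg fun i _ => sq_nonneg _
  refine (Real.le_sqrt (norm_nonneg D) hsum).1 (D.opNorm_le_bound (Real.sqrt_nonneg _) fun x => ?_)
  calc ‖D x‖ = ‖∑ i, inner 𝕜 (b i) x • D (b i)‖ := by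
        conv_lhs => rw [← b.sum_repr' x, map_sum]
        simp only [map_smul]
    _ ≤ ∑ i, ‖D (b i)‖ * ‖inner 𝕜 (b i) x‖ :=
        (norm_sum_le _ _).trans_eq (by simp only [norm_smul, mul_comm])
    _ ≤ √(∑ i, ‖D (b i)‖ ^ 2) * √(∑ i, ‖inner 𝕜 (b i) x‖ ^ 2) :=
        Real.sum_mul_le_sqrt_mul_sqrt _ _ _
    _ = √(∑ i, ‖D (b i)‖ ^ 2) * ‖x‖ := by
        rw [b.sum_sq_norm_inner_right, Real.sqrt_sq (norm_nonneg x)]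

lemma add_one_div_le {t η : ℝ} (hη : 0 < η) (hs : 0 < s) :
    t + 1 / η ≤ (1 + 9 / s) * η * (1 / 2 * t ^ 2 + 1 / η ^ 2 * (s / 6)) := by
  have hsplit : (1 + 9 / s) * η * (1 / 2 * t ^ 2 + 1 / η ^ 2 * (s / 6)) - (t + 1 / η) =
      η / 2 * (t - 1 / η) ^ 2 + 9 / s * η / 2 * t ^ 2 + s / (6 * η) := by
    field_simp
    ring
  rw [← sub_nonneg, hsplit]
  positivity

lemma norm_fderiv_add_le_energyDensity (hs : 0 < s)
    (hf : ∀ U ∈ orthogonalGroup (Fin 3) ℝ, ∀ A, f (U * A * Uᵀ) = f A) {ξ η δ : ℝ} (hη : 0 < η)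
    (hbdd : BddBelow {v | ∃ P ∈ Sym0E, v = 1 / ξ ^ 2 * f (toM P) + 1 / η ^ 2 * gMagE s P})
    (hδ : δ ≤ s / 6) {Ω : Set V3} (hΩ : IsOpen Ω) {Q : V3 → E9} {x : V3} (hx : x ∈ Ω)
    (hQ : Q x ∈ Sym0E) (hQδ : infDist (Q x) (NsetE s) < δ) (hQ22 : Q x (2, 2) < s / 3) :
    ‖fderiv ℝ Q x‖ + 1 / η ≤ (1 + 9 / s) * η * energyDensity f s ξ η Ω Q x := by
  refine (add_one_div_le hη hs).trans ?_
  have hgrad := sq_opNorm_le_sum_sq_norm_apply (EuclideanSpace.basisFun (Fin 3) ℝ) (fderiv ℝ Q x)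
  simp only [EuclideanSpace.basisFun_apply] at hgrad
  rw [energyDensity, fderivWithin_of_isOpen hΩ hx, add_assoc, add_assoc, ← add_assoc (_ * f _)]
  gcongr
  exact le_potential_add_groundEnergyShift hf hbdd hδ hQ hQδ hQ22

end Energy

section LevelSets

/-- The part of `A_δ` where `Q` is misaligned with the magnetic field, in that `Q₃₃ < s / 3`. -/
def tiltedRegion (s δ : ℝ) (Ω : Set V3) (Q : V3 → E9) : Set V3 :=
  {x ∈ Ω | infDist (Q x) (NsetE s) < δ ∧ Q x (2, 2) < s / 3}

variable {s α δ : ℝ} {Ω : Set V3} {Q : V3 → E9}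

lemma isOpen_tiltedRegion (hΩ : IsOpen Ω) (hQ : ContinuousOn Q Ω) :
    IsOpen (tiltedRegion s δ Ω Q) :=
  hQ.isOpen_inter_preimage hΩ ((isOpen_lt (continuous_infDist_pt _) continuous_const).inter
    (isOpen_lt (by fun_prop : Continuous fun A : E9 => A (2, 2)) continuous_const))

lemma setOf_sub_mem_TsetE_subset_tiltedRegion (hs : 0 ≤ s) (hα : α ≤ s / 12) (hδ : δ ≤ s / 12)
    {Y : E9} (hY : ‖Y‖ < α) :
    {x | (x ∈ Ω ∧ infDist (Q x) (NsetE s) < δ) ∧ Q x - Y ∈ TsetE} ⊆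
      {x ∈ tiltedRegion s δ Ω Q | Q x - Y ∈ TsetE ∩ closedBall 0 (2 * s)} := by
  rintro x ⟨⟨hxΩ, hx⟩, hT⟩
  refine ⟨⟨hxΩ, hx, apply_two_two_lt_of_sub_mem_TsetE hs (by linarith) hx hY hT⟩, hT, ?_⟩
  rw [mem_closedBall_zero_iff]
  linarith [norm_sub_le_of_infDist_NsetE_lt hs hx hY]

lemma measurableSet_Sym0E_inter_ball (α : ℝ) : MeasurableSet {Y : E9 | Y ∈ Sym0E ∧ ‖Y‖ < α} :=
  sym0.closed_of_finiteDimensional.measurableSet.inter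
    (isOpen_lt continuous_norm continuous_const).measurableSet

theorem exists_lintegral_hausdorffMeasure_le_lintegral_tiltedRegion (hs : 0 ≤ s) :
    ∃ K > 0, ∀ α ≤ s / 12, ∀ δ ≤ s / 12, ∀ Ω : Set V3, IsOpen Ω → ∀ Q : V3 → E9,
      ContDiffOn ℝ 1 Q Ω → (∀ x ∈ Ω, Q x ∈ Sym0E) → ∀ ε > 0,
      ∫⁻ Y in {Y : E9 | Y ∈ Sym0E ∧ ‖Y‖ < α},
          μH[2] {x | (x ∈ Ω ∧ infDist (Q x) (NsetE s) < δ) ∧ Q x - Y ∈ TsetE} ∂(μH[5]) ≤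
        ENNReal.ofReal K *
          ∫⁻ x in tiltedRegion s δ Ω Q, ENNReal.ofReal (‖fderiv ℝ Q x‖ + ε) := by
  obtain ⟨K, hK, htube⟩ := exists_hausdorffMeasure_setOf_sub_mem_thickening_TsetE_le
    (show 0 ≤ 2 * s by positivity)
  have hvol : 0 < volume.real (ball (0 : V3) 1) :=
    ENNReal.toReal_pos (measure_ball_pos _ _ one_pos).ne' measure_ball_lt_top.ne
  refine ⟨10 ^ 2 * 5 ^ 1 * K / volume.real (ball (0 : V3) 1), by positivity, ?_⟩
  intro α hα δ hδ Ω hΩ Q hQ hQS ε hε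
  have hcoarea := lintegral_hausdorffMeasure_preimage_sub_le (μ := volume) (ν := μH[5])
    (B := {Y : E9 | Y ∈ Sym0E ∧ ‖Y‖ < α}) (T := TsetE ∩ closedBall 0 (2 * s)) (d := 2) (j := 1)
    (isOpen_tiltedRegion (s := s) (δ := δ) hΩ hQ.continuousOn) (hQ.mono (sep_subset _ _))
    (measurableSet_Sym0E_inter_ball α) (by simp) hK.le (fun x hx r hr hr1 => ?_) hε
  · simp only [Nat.cast_ofNat, pow_one] at hcoarea ⊢
    exact (setLIntegral_mono' (measurableSet_Sym0E_inter_ball α) fun Y hY => measure_mono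
      (setOf_sub_mem_TsetE_subset_tiltedRegion hs hα hδ hY.2)).trans hcoarea
  · rw [pow_one]
    refine (measure_mono ?_).trans (htube _ (hQS x hx.1) r hr hr1)
    exact fun Y hY => ⟨hY.1.1, hY.2⟩

end LevelSets

theorem statement11_general {f : Mat3 → ℝ} {s : ℝ} (hs : 0 < s)
    (hf : ∀ U ∈ orthogonalGroup (Fin 3) ℝ, ∀ A, f (U * A * Uᵀ) = f A)
    (hbdd : ∀ ξ η : ℝ, 0 < ξ → 0 < η →
      BddBelow {v | ∃ P ∈ Sym0E, v = 1 / ξ ^ 2 * f (toM P) + 1 / η ^ 2 * gMagE s P}) :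
    ∃ Cc > 0, ∀ α ≤ s / 12, ∀ δ ≤ s / 12, ∀ Ω : Set V3, IsOpen Ω → ∀ η ξ : ℝ, 0 < η → 0 < ξ →
      ∀ Q : V3 → E9, ContDiffOn ℝ 1 Q Ω → (∀ x ∈ Ω, Q x ∈ Sym0E) →
      ∫⁻ Y in {Y : E9 | Y ∈ Sym0E ∧ ‖Y‖ < α},
          μH[2] {x | (x ∈ Ω ∧ infDist (Q x) (NsetE s) < δ) ∧ Q x - Y ∈ TsetE} ∂(μH[5]) ≤
        ENNReal.ofReal (Cc * η) *
          ∫⁻ x in {x | x ∈ Ω ∧ infDist (Q x) (NsetE s) < δ},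
            ENNReal.ofReal (energyDensity f s ξ η Ω Q x) := by
  obtain ⟨K, hK, hlevel⟩ := exists_lintegral_hausdorffMeasure_le_lintegral_tiltedRegion hs.le
  refine ⟨K * (1 + 9 / s), by positivity, ?_⟩
  intro α hα δ hδ Ω hΩ η ξ hη hξ Q hQ hQS
  have hopen : IsOpen (tiltedRegion s δ Ω Q) := isOpen_tiltedRegion hΩ hQ.continuousOn
  refine (hlevel α hα δ hδ Ω hΩ Q hQ hQS (1 / η) (by positivity)).trans ?_
  calc ENNReal.ofReal K * ∫⁻ x in tiltedRegion s δ Ω Q, ENNReal.ofReal (‖fderiv ℝ Q x‖ + 1 / η)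
      ≤ ENNReal.ofReal K * ∫⁻ x in tiltedRegion s δ Ω Q, ENNReal.ofReal ((1 + 9 / s) * η) *
          ENNReal.ofReal (energyDensity f s ξ η Ω Q x) := by
        gcongr ENNReal.ofReal K * ?_
        refine setLIntegral_mono' hopen.measurableSet fun x ⟨hxΩ, hxδ, hx22⟩ => ?_
        rw [← ENNReal.ofReal_mul (by positivity)]
        exact ENNReal.ofReal_le_ofReal (norm_fderiv_add_le_energyDensity hs hf hη
          (hbdd ξ η hξ hη) (by linarith) hΩ hxΩ (hQS x hxΩ) hxδ hx22)
    _ = ENNReal.ofReal (K * (1 + 9 / s) * η) *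
          ∫⁻ x in tiltedRegion s δ Ω Q, ENNReal.ofReal (energyDensity f s ξ η Ω Q x) := by
        rw [lintegral_const_mul' _ _ ENNReal.ofReal_ne_top, ← mul_assoc,
          ← ENNReal.ofReal_mul hK.le, mul_assoc K]
    _ ≤ _ := by
        gcongr
        exact fun x hx => ⟨hx.1, hx.2.1⟩

theorem statement11 (a b c C : ℝ) (ha : 0 < a) (hb : 0 < b) (hc : 0 < c)
    (hC : IsLeast ((fun A => fLdG a b c C (toM A)) '' Sym0E) 0) :
    ∃ α₀ > (0 : ℝ), ∃ δ₀ > (0 : ℝ),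
      ∀ α : ℝ, 0 < α → α < α₀ → ∀ δ : ℝ, 0 < δ → δ < δ₀ →
      ∃ Cc > (0 : ℝ),
        ∀ (Ω : Set V3), IsOpen Ω → ∀ η ξ : ℝ, 0 < η → 0 < ξ →
        ∀ Q : V3 → E9, ContDiffOn ℝ (⊤ : ℕ∞) Q Ω → (∀ x ∈ Ω, Q x ∈ Sym0E) →
        (∫⁻ Y in {Y : E9 | Y ∈ Sym0E ∧ ‖Y‖ < α},
            μH[2] {x : V3 | (x ∈ Ω ∧ infDist (Q x) (NsetE (sStar a b c)) < δ) ∧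
              Q x - Y ∈ TsetE} ∂(μH[5])) ≤
          ENNReal.ofReal (Cc * η) *
            ∫⁻ x in {x : V3 | x ∈ Ω ∧ infDist (Q x) (NsetE (sStar a b c)) < δ},
              ENNReal.ofReal (density a b c C ξ η Ω Q x) := by
  obtain ⟨Cc, hCc, h⟩ := statement11_general (sStar_pos a hb hc)
    (fun _ hU => fLdG_mul_mul_transpose a b c C hU)
    fun _ _ hξ _ => bddBelow_fLdG_add_gMagE a b C (sStar a b c) hc hξ
  have hs : 0 < sStar a b c / 12 := by linarith [sStar_pos a hb hc]
  exact ⟨_, hs, _, hs, fun α _ hα δ _ hδ => ⟨Cc, hCc, fun Ω hΩ η ξ hη hξ Q hQ =>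
    h α hα.le δ hδ.le Ω hΩ η ξ hη hξ Q (hQ.of_le (mod_cast le_top))⟩⟩
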